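/- arXiv:1610.08116 — 3 statements merged into one kernel-verified Lean document; each statement's English description precedes it below -/
import Mathlib

section
/- Substitution lemma: Let 𝒜 = x̄:T̄ and suppose the closed values v̄ satisfy 𝒪𝒮;∅ ⊢ v̄ : T̄. If 𝒟;𝒜 ⊢ e : T, then 𝒟;∅ ⊢ e[x̄:=v̄] : T. -/
namespace HFC

/-- Expressions of the higher-order field calculus (HFC). -/
inductive Expr : Type where
  | var : String → Expr
  | fld : (ℕ → Option Expr) → Expr
  | cnst : String → List Expr → Expr
  | builtin : String → Expr
  | dfun : String → Expr
  | lam : List String → Expr → Expr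
  | app : Expr → List Expr → Expr
  | rep : Expr → String → Expr → Expr
  | nbr : Expr → Expr

/-- Free occurrence of a variable in an expression. -/
inductive FreeIn (x : String) : Expr → Prop where
  | var : FreeIn x (.var x)
  | fld {φ : ℕ → Option Expr} {δ : ℕ} {e : Expr} :
      φ δ = some e → FreeIn x e → FreeIn x (.fld φ)
  | cnst {c es e} : e ∈ es → FreeIn x e → FreeIn x (.cnst c es)
  | lam {xs e} : x ∉ xs → FreeIn x e → FreeIn x (.lam xs e)
  | appFun {e es} : FreeIn x e → FreeIn x (.app e es)
  | appArg {e es e'} : e' ∈ es → FreeIn x e' → FreeIn x (.app e es)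
  | repInit {e₁ y e₂} : FreeIn x e₁ → FreeIn x (.rep e₁ y e₂)
  | repBody {e₁ y e₂} : x ≠ y → FreeIn x e₂ → FreeIn x (.rep e₁ y e₂)
  | nbr {e} : FreeIn x e → FreeIn x (.nbr e)

def Closed (e : Expr) : Prop := ∀ x, ¬ FreeIn x e

/-- Local values: data values and function values. -/
inductive IsLocalVal : Expr → Prop where
  | cnst {c es} : (∀ e ∈ es, IsLocalVal e) → IsLocalVal (.cnst c es)
  | builtin {b} : IsLocalVal (.builtin b)
  | dfun {d} : IsLocalVal (.dfun d)
  | lam {xs e} : Closed (.lam xs e) → IsLocalVal (.lam xs e)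

/-- Values: local values and neighbouring field values. -/
def IsVal (e : Expr) : Prop :=
  IsLocalVal e ∨ ∃ φ, e = Expr.fld φ ∧ ∀ δ ℓ, φ δ = some ℓ → IsLocalVal ℓ

/-- Function values. -/
def IsFunVal (e : Expr) : Prop :=
  (∃ b, e = Expr.builtin b) ∨ (∃ d, e = Expr.dfun d) ∨
  (∃ xs b, e = Expr.lam xs b ∧ Closed e)

/-- Types of HFC. -/
inductive Ty : Type where
  | base : String → Ty
  | fld : Ty → Ty
  | arrow : List Ty → Ty → Ty

/-- Local return types S ::= B | (T̄)→S. -/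
inductive IsLocalRet : Ty → Prop where
  | base {B} : IsLocalRet (.base B)
  | arrow {Ts S} : IsLocalRet S → IsLocalRet (.arrow Ts S)

/-- Field types F ::= field(S). -/
def IsFieldTy (T : Ty) : Prop := ∃ S, T = Ty.fld S ∧ IsLocalRet S

/-- Return types R ::= F | S. -/
def IsReturn (T : Ty) : Prop := IsFieldTy T ∨ IsLocalRet T

/-- Local types L ::= B | (T̄)→R. -/
inductive IsLocal : Ty → Prop where
  | base {B} : IsLocal (.base B)
  | arrow {Ts R} : IsReturn R → IsLocal (.arrow Ts R)

/-- Local-type-scheme environments: each name is mapped to the set of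
instantiations of its local type scheme (or is undefined). -/
abbrev SchemeEnv := String → Option (Set Ty)

/-- Type environments for program variables. -/
abbrev VarEnv := String → Option Ty

def VarEnv.empty : VarEnv := fun _ => none

/-- Extension of a lookup environment by a list of bindings x̄ ↦ w̄. -/
def extendA {W : Type _} (X : String → Option W) (xs : List String) (ws : List W) :
    String → Option W :=
  fun y => ((xs.zip ws).lookup y).orElse (fun _ => X y)

/-- The typing judgement 𝒟;𝒜 ⊢ e : T of HFC (Figure 4). -/
inductive HasTy (D : SchemeEnv) : VarEnv → Expr → Ty → Prop where
  | var {A x T} : A x = some T → HasTy D A (.var x) T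
  | fld {A φ S} : IsLocalRet S →
      (∀ δ ℓ, φ δ = some ℓ → IsLocalVal ℓ) →
      (∀ δ ℓ, φ δ = some ℓ → HasTy D A ℓ S) →
      HasTy D A (.fld φ) (.fld S)
  | cnst {A c es s Ls S} : D c = some s → Ty.arrow Ls S ∈ s →
      (∀ L ∈ Ls, IsLocal L) → IsLocalRet S →
      (∀ e ∈ es, IsLocalVal e) →
      es.length = Ls.length →
      (∀ (i : ℕ) e L, es[i]? = some e → Ls[i]? = some L → HasTy D A e L) →
      HasTy D A (.cnst c es) S
  | builtin {A b s L} : D b = some s → L ∈ s → IsLocal L → HasTy D A (.builtin b) L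
  | dfun {A d s L} : D d = some s → L ∈ s → IsLocal L → HasTy D A (.dfun d) L
  | lam {A xs e Ts R} :
      (∀ y, FreeIn y (.lam xs e) → ∃ L, A y = some L ∧ IsLocal L) →
      IsReturn R → xs.length = Ts.length →
      HasTy D (extendA A xs Ts) e R →
      HasTy D A (.lam xs e) (.arrow Ts R)
  | app {A e es Ts R} : HasTy D A e (.arrow Ts R) →
      es.length = Ts.length →
      (∀ (i : ℕ) e' T', es[i]? = some e' → Ts[i]? = some T' → HasTy D A e' T') →
      HasTy D A (.app e es) R
  | rep {A x e₁ e₂ S} : IsLocalRet S → HasTy D A e₁ S →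
      HasTy D (extendA A [x] [S]) e₂ S →
      HasTy D A (.rep e₁ x e₂) S
  | nbr {A e S} : IsLocalRet S → HasTy D A e S → HasTy D A (.nbr e) (.fld S)

/-- Substitution maps. -/
abbrev SubstMap := String → Option Expr

def maskS (σ : SubstMap) (xs : List String) : SubstMap :=
  fun y => if y ∈ xs then none else σ y

def bindVals (xs : List String) (vs : List Expr) : SubstMap :=
  fun y => (xs.zip vs).lookup y

/-- Capture-avoiding simultaneous substitution (of closed values)
e[x̄:=v̄] as a relation: `Subst σ e e'` means e' = eσ. -/
inductive Subst : SubstMap → Expr → Expr → Prop where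
  | varHit {σ x v} : σ x = some v → Subst σ (.var x) v
  | varMiss {σ x} : σ x = none → Subst σ (.var x) (.var x)
  | fld {σ φ} : Subst σ (.fld φ) (.fld φ)
  | cnst {σ c es es'} : es'.length = es.length →
      (∀ (i : ℕ) a b, es[i]? = some a → es'[i]? = some b → Subst σ a b) →
      Subst σ (.cnst c es) (.cnst c es')
  | builtin {σ b} : Subst σ (.builtin b) (.builtin b)
  | dfun {σ d} : Subst σ (.dfun d) (.dfun d)
  | lam {σ xs e e'} : Subst (maskS σ xs) e e' → Subst σ (.lam xs e) (.lam xs e')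
  | app {σ e e' es es'} : Subst σ e e' → es'.length = es.length →
      (∀ (i : ℕ) a b, es[i]? = some a → es'[i]? = some b → Subst σ a b) →
      Subst σ (.app e es) (.app e' es')
  | rep {σ x e₁ e₁' e₂ e₂'} : Subst σ e₁ e₁' → Subst (maskS σ [x]) e₂ e₂' →
      Subst σ (.rep e₁ x e₂) (.rep e₁' x e₂')
  | nbr {σ e e'} : Subst σ e e' → Subst σ (.nbr e) (.nbr e')

theorem lookup_zip_none {W : Type _} : ∀ (xs : List String) (ws : List W) (y : String),
    y ∉ xs → (xs.zip ws).lookup y = none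
  | [], _, _, _ => by simp
  | _ :: _, [], _, _ => by simp
  | x :: xs, w :: ws, y, h => by
      simp only [List.mem_cons, not_or] at h
      have hb : (y == x) = false := by simpa using h.1
      simp [List.lookup_cons, hb, lookup_zip_none xs ws y h.2]

theorem lookup_zip_some {W : Type _} : ∀ (xs : List String) (ws : List W) (y : String),
    xs.length = ws.length → y ∈ xs → ∃ w, (xs.zip ws).lookup y = some w
  | [], _, _, _, h => by simp at h
  | _ :: _, [], _, hl, _ => by simp at hl
  | x :: xs, w :: ws, y, hl, h => by
      by_cases hb : y = x
      · exact ⟨w, by simp [List.lookup_cons, hb]⟩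
      · have hm : y ∈ xs := by simpa [hb] using h
        have hb' : (y == x) = false := by simpa using hb
        obtain ⟨w', hw⟩ := lookup_zip_some xs ws y (by simpa using hl) hm
        exact ⟨w', by simp [List.lookup_cons, hb', hw]⟩

theorem extendA_notMem {W : Type _} (X : String → Option W) (xs : List String) (ws : List W)
    (y : String) (h : y ∉ xs) : extendA X xs ws y = X y := by
  simp [extendA, lookup_zip_none xs ws y h]

theorem extendA_mem {W : Type _} (X Y : String → Option W) (xs : List String) (ws : List W)
    (y : String) (hl : xs.length = ws.length) (h : y ∈ xs) :
    extendA X xs ws y = extendA Y xs ws y := by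
  obtain ⟨w, hw⟩ := lookup_zip_some xs ws y hl h
  simp [extendA, hw]

theorem IsLocalVal.closed {e : Expr} (h : IsLocalVal e) : Closed e := by
  induction h with
  | cnst _ ih =>
    intro x hx
    cases hx with
    | cnst hm hf => exact ih _ hm x hf
  | builtin => intro x hx; cases hx
  | dfun => intro x hx; cases hx
  | lam h => exact h

theorem fld_closed {φ : ℕ → Option Expr} (h : ∀ δ ℓ, φ δ = some ℓ → IsLocalVal ℓ) :
    Closed (.fld φ) := by
  intro x hx
  cases hx with
  | fld he hf => exact (h _ _ he).closed x hf

theorem IsVal.closed {e : Expr} (h : IsVal e) : Closed e := by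
  rcases h with h | ⟨φ, rfl, h⟩
  · exact h.closed
  · exact fld_closed h

theorem HasTy.transfer {D D' : SchemeEnv} (hD : ∀ n s, D n = some s → D' n = some s)
    {A : VarEnv} {e : Expr} {T : Ty} (h : HasTy D A e T) :
    ∀ A' : VarEnv, (∀ x, FreeIn x e → A' x = A x) → HasTy D' A' e T := by
  induction h with
  | var hx => intro A' hA; exact .var ((hA _ .var).trans hx)
  | fld hS hv _ ih =>
    intro A' hA
    exact .fld hS hv fun δ ℓ he => ih δ ℓ he A' fun x hx => hA x (.fld he hx)
  | cnst hc hs hL hS hv hl _ ih =>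
    intro A' hA
    exact .cnst (hD _ _ hc) hs hL hS hv hl fun i e L he hL' =>
      ih i e L he hL' A' fun x hx => hA x (.cnst (List.mem_of_getElem? he) hx)
  | builtin hb hs hL => intro A' _; exact .builtin (hD _ _ hb) hs hL
  | dfun hb hs hL => intro A' _; exact .dfun (hD _ _ hb) hs hL
  | @lam A xs e Ts R hf hR hl _ ih =>
    intro A' hA
    refine .lam (fun y hy => ?_) hR hl (ih _ fun x hx => ?_)
    · rw [hA y hy]; exact hf y hy
    · by_cases hm : x ∈ xs
      · exact extendA_mem _ _ _ _ _ hl hm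
      · rw [extendA_notMem _ _ _ _ hm, extendA_notMem _ _ _ _ hm]
        exact hA x (.lam hm hx)
  | app _ hl _ ih1 ih2 =>
    intro A' hA
    exact .app (ih1 A' fun x hx => hA x (.appFun hx)) hl fun i e T he hT =>
      ih2 i e T he hT A' fun x hx => hA x (.appArg (List.mem_of_getElem? he) hx)
  | @rep A y e₁ e₂ S hS _ _ ih1 ih2 =>
    intro A' hA
    refine .rep hS (ih1 A' fun x hx => hA x (.repInit hx)) (ih2 _ fun x hx => ?_)
    by_cases hm : x ∈ [y]
    · exact extendA_mem _ _ _ _ _ rfl hm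
    · rw [extendA_notMem _ _ _ _ hm, extendA_notMem _ _ _ _ hm]
      exact hA x (.repBody (by simpa using hm) hx)
  | nbr hS _ ih => intro A' hA; exact .nbr hS (ih A' fun x hx => hA x (.nbr hx))

theorem list_eq_of_getElem? {es es' : List Expr} (hl : es'.length = es.length)
    (h : ∀ (i : ℕ) a b, es[i]? = some a → es'[i]? = some b → b = a) : es' = es := by
  apply List.ext_getElem hl
  intro i h1 h2
  exact h i _ _ (List.getElem?_eq_getElem h2) (List.getElem?_eq_getElem h1)

theorem exists_getElem? {es es' : List Expr} (hl : es'.length = es.length) {i : ℕ} {b : Expr}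
    (h : es'[i]? = some b) : ∃ a, es[i]? = some a := by
  obtain ⟨hi, _⟩ := List.getElem?_eq_some_iff.1 h
  exact ⟨es[i]'(hl ▸ hi), List.getElem?_eq_getElem _⟩

theorem Subst.eq_self {σ : SubstMap} {e e' : Expr} (h : Subst σ e e') :
    (∀ x, FreeIn x e → σ x = none) → e' = e := by
  induction h with
  | varHit hx => intro hf; rw [hf _ .var] at hx; cases hx
  | varMiss _ => intro _; rfl
  | fld => intro _; rfl
  | cnst hl _ ih =>
    intro hf
    congr 1
    exact list_eq_of_getElem? hl fun i a b ha hb => ih i a b ha hb fun x hx =>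
      hf x (.cnst (List.mem_of_getElem? ha) hx)
  | builtin => intro _; rfl
  | dfun => intro _; rfl
  | @lam σ xs e e' _ ih =>
    intro hf
    rw [ih fun x hx => ?_]
    by_cases hm : x ∈ xs
    · simp [maskS, hm]
    · simp only [maskS, hm, if_false]; exact hf x (.lam hm hx)
  | app _ hl _ ih1 ih2 =>
    intro hf
    rw [ih1 fun x hx => hf x (.appFun hx)]
    congr 1
    exact list_eq_of_getElem? hl fun i a b ha hb => ih2 i a b ha hb fun x hx =>
      hf x (.appArg (List.mem_of_getElem? ha) hx)
  | @rep σ y e₁ e₁' e₂ e₂' _ _ ih1 ih2 =>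
    intro hf
    rw [ih1 fun x hx => hf x (.repInit hx), ih2 fun x hx => ?_]
    by_cases hm : x ∈ [y]
    · simp only [maskS, hm, if_true]
    · simp only [maskS, hm, if_false]; exact hf x (.repBody (by simpa using hm) hx)
  | nbr _ ih => intro hf; rw [ih fun x hx => hf x (.nbr hx)]

theorem maskS_some {σ : SubstMap} {xs : List String} {x : String} {v : Expr}
    (h : maskS σ xs x = some v) : x ∉ xs ∧ σ x = some v := by
  by_cases hm : x ∈ xs
  · simp [maskS, hm] at h
  · simp only [maskS, hm, if_false] at h; exact ⟨hm, h⟩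

theorem maskS_none {σ : SubstMap} {xs : List String} {x : String}
    (h : maskS σ xs x = none) (hm : x ∉ xs) : σ x = none := by
  simpa only [maskS, hm, if_false] using h

theorem Subst.free {σ : SubstMap} {e e' : Expr} (h : Subst σ e e') :
    (∀ x v, σ x = some v → Closed v) → ∀ y, FreeIn y e' → FreeIn y e := by
  induction h with
  | varHit hx => intro hc y hy; exact absurd hy (hc _ _ hx y)
  | varMiss _ => intro _ y hy; exact hy
  | fld => intro _ y hy; exact hy
  | cnst hl _ ih =>
    intro hc y hy
    cases hy with
    | cnst hm hf =>
      obtain ⟨i, hi⟩ := List.mem_iff_getElem?.1 hm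
      obtain ⟨a, ha⟩ := exists_getElem? hl hi
      exact .cnst (List.mem_of_getElem? ha) (ih i a _ ha hi hc y hf)
  | builtin => intro _ y hy; exact hy
  | dfun => intro _ y hy; exact hy
  | lam _ ih =>
    intro hc y hy
    cases hy with
    | lam hm hf => exact .lam hm (ih (fun x v hx => hc x v (maskS_some hx).2) y hf)
  | app _ hl _ ih1 ih2 =>
    intro hc y hy
    cases hy with
    | appFun hf => exact .appFun (ih1 hc y hf)
    | appArg hm hf =>
      obtain ⟨i, hi⟩ := List.mem_iff_getElem?.1 hm
      obtain ⟨a, ha⟩ := exists_getElem? hl hi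
      exact .appArg (List.mem_of_getElem? ha) (ih2 i a _ ha hi hc y hf)
  | rep _ _ ih1 ih2 =>
    intro hc y hy
    cases hy with
    | repInit hf => exact .repInit (ih1 hc y hf)
    | repBody hm hf => exact .repBody hm (ih2 (fun x v hx => hc x v (maskS_some hx).2) y hf)
  | nbr _ ih =>
    intro hc y hy
    cases hy with
    | nbr hf => exact .nbr (ih hc y hf)

/-- Free variables of a substituted well-typed expression are not in the substitution's domain. -/
theorem Subst.free_none {D : SchemeEnv} {A : VarEnv} {e : Expr} {T : Ty} (ht : HasTy D A e T) :
    ∀ (σ : SubstMap) (e' : Expr), Subst σ e e' → (∀ x v, σ x = some v → Closed v) →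
      ∀ y, FreeIn y e' → σ y = none := by
  induction ht with
  | var _ =>
    intro σ e' hs hc y hy
    cases hs with
    | varHit hx => exact absurd hy (hc _ _ hx y)
    | varMiss hx => cases hy; exact hx
  | fld _ hv _ _ =>
    intro σ e' hs hc y hy
    cases hs
    exact absurd hy (fld_closed hv y)
  | @cnst _ c _ _ _ _ _ _ _ _ hv _ _ _ =>
    intro σ e' hs hc y hy
    have hcl := (IsLocalVal.cnst (c := c) hv).closed
    rw [hs.eq_self fun x hx => absurd hx (hcl x)] at hy
    exact absurd hy (hcl y)
  | builtin => intro σ e' hs hc y hy; cases hs; cases hy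
  | dfun => intro σ e' hs hc y hy; cases hs; cases hy
  | lam _ _ _ _ ih =>
    intro σ e' hs hc y hy
    cases hs with
    | lam hs =>
      cases hy with
      | lam hm hf =>
        exact maskS_none (ih _ _ hs (fun x v hx => hc x v (maskS_some hx).2) y hf) hm
  | app _ hl _ ih1 ih2 =>
    intro σ e' hs hc y hy
    cases hs with
    | app hs1 hl' hs2 =>
      cases hy with
      | appFun hf => exact ih1 _ _ hs1 hc y hf
      | appArg hm hf =>
        obtain ⟨i, hi⟩ := List.mem_iff_getElem?.1 hm
        obtain ⟨a, ha⟩ := exists_getElem? hl' hi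
        obtain ⟨hlt, _⟩ := List.getElem?_eq_some_iff.1 ha
        exact ih2 i a _ ha (List.getElem?_eq_getElem (hl ▸ hlt)) _ _ (hs2 i _ _ ha hi) hc y hf
  | rep _ _ _ ih1 ih2 =>
    intro σ e' hs hc y hy
    cases hs with
    | rep hs1 hs2 =>
      cases hy with
      | repInit hf => exact ih1 _ _ hs1 hc y hf
      | repBody hm hf =>
        exact maskS_none (ih2 _ _ hs2 (fun x v hx => hc x v (maskS_some hx).2) y hf)
          (by simpa using hm)
  | nbr _ _ ih =>
    intro σ e' hs hc y hy
    cases hs with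
    | nbr hs =>
      cases hy with
      | nbr hf => exact ih _ _ hs hc y hf

/-- `σ` maps variables of `A` to closed well-typed expressions or leaves them typed by `A'`. -/
def Compat (D : SchemeEnv) (σ : SubstMap) (A A' : VarEnv) : Prop :=
  (∀ x v, σ x = some v → Closed v) ∧
  (∀ x v T, σ x = some v → A x = some T → HasTy D VarEnv.empty v T) ∧
  (∀ x T, σ x = none → A x = some T → A' x = some T)

theorem Compat.ext {D : SchemeEnv} {σ : SubstMap} {A A' : VarEnv} (h : Compat D σ A A')
    (xs : List String) (Ts : List Ty) (hl : xs.length = Ts.length) :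
    Compat D (maskS σ xs) (extendA A xs Ts) (extendA A' xs Ts) := by
  obtain ⟨h1, h2, h3⟩ := h
  refine ⟨fun x v hx => h1 x v (maskS_some hx).2, fun x v T hx hA => ?_, fun x T hx hA => ?_⟩
  · obtain ⟨hm, hx⟩ := maskS_some hx
    rw [extendA_notMem _ _ _ _ hm] at hA
    exact h2 x v T hx hA
  · by_cases hm : x ∈ xs
    · rw [← hA]; exact extendA_mem _ _ _ _ _ hl hm
    · rw [extendA_notMem _ _ _ _ hm] at hA ⊢
      exact h3 x T (maskS_none hx hm) hA

theorem HasTy.subst {D : SchemeEnv} {A : VarEnv} {e : Expr} {T : Ty} (ht : HasTy D A e T) :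
    ∀ (σ : SubstMap) (A' : VarEnv) (e' : Expr), Compat D σ A A' → Subst σ e e' →
      HasTy D A' e' T := by
  induction ht with
  | var hA =>
    intro σ A' e' hC hs
    cases hs with
    | varHit hx =>
      exact (hC.2.1 _ _ _ hx hA).transfer (fun _ _ h => h) A'
        fun y hy => absurd hy (hC.1 _ _ hx y)
    | varMiss hx => exact .var (hC.2.2 _ _ hx hA)
  | fld hS hv ht _ =>
    intro σ A' e' hC hs
    cases hs
    exact (HasTy.fld hS hv ht).transfer (fun _ _ h => h) A'
      fun y hy => absurd hy (fld_closed hv y)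
  | @cnst _ c _ _ _ _ h1 h2 h3 h4 hv h6 h7 _ =>
    intro σ A' e' hC hs
    have hcl := (IsLocalVal.cnst (c := c) hv).closed
    rw [hs.eq_self fun x hx => absurd hx (hcl x)]
    exact (HasTy.cnst h1 h2 h3 h4 hv h6 h7).transfer (fun _ _ h => h) A'
      fun y hy => absurd hy (hcl y)
  | builtin h1 h2 h3 => intro σ A' e' hC hs; cases hs; exact .builtin h1 h2 h3
  | dfun h1 h2 h3 => intro σ A' e' hC hs; cases hs; exact .dfun h1 h2 h3
  | lam hf hR hl ht ih =>
    intro σ A' e' hC hs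
    have hs0 := hs
    cases hs with
    | lam hs =>
      refine .lam (fun y hy => ?_) hR hl (ih _ _ _ (hC.ext _ _ hl) hs)
      obtain ⟨L, hA, hL⟩ := hf y (hs0.free hC.1 y hy)
      exact ⟨L, hC.2.2 _ _ (Subst.free_none (HasTy.lam hf hR hl ht) _ _ hs0 hC.1 y hy) hA, hL⟩
  | app _ hl _ ih1 ih2 =>
    intro σ A' e' hC hs
    cases hs with
    | app hs1 hl' hs2 =>
      refine .app (ih1 _ _ _ hC hs1) (hl'.trans hl) fun i b T hb hT => ?_
      obtain ⟨a, ha⟩ := exists_getElem? hl' hb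
      exact ih2 i a T ha hT _ _ _ hC (hs2 i a b ha hb)
  | rep hS _ _ ih1 ih2 =>
    intro σ A' e' hC hs
    cases hs with
    | rep hs1 hs2 => exact .rep hS (ih1 _ _ _ hC hs1) (ih2 _ _ _ (hC.ext _ _ rfl) hs2)
  | nbr hS _ ih =>
    intro σ A' e' hC hs
    cases hs with
    | nbr hs => exact .nbr hS (ih _ _ _ hC hs)

theorem lookup_zip_forall₂ {P : Expr → Ty → Prop} {vs : List Expr} {Ts : List Ty}
    (h : List.Forall₂ P vs Ts) : ∀ (xs : List String) (x : String) (v : Expr),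
    (xs.zip vs).lookup x = some v →
      v ∈ vs ∧ ∀ T, (xs.zip Ts).lookup x = some T → P v T := by
  induction h with
  | nil => intro xs x v hv; simp at hv
  | @cons w U ws Us hp _ ih =>
    intro xs x v hv
    cases xs with
    | nil => simp at hv
    | cons z zs =>
      by_cases hb : x = z
      · subst hb
        simp [List.lookup_cons] at hv ⊢
        subst hv
        exact ⟨Or.inl rfl, hp⟩
      · have hb' : (x == z) = false := by simpa using hb
        simp only [List.zip_cons_cons, List.lookup_cons, hb'] at hv ⊢
        obtain ⟨h1, h2⟩ := ih zs x v hv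
        exact ⟨List.mem_cons_of_mem _ h1, h2⟩

/-- **Substitution lemma** (Lemma A.1 of the paper): if 𝒜 = x̄:T̄, the closed
values v̄ satisfy 𝒪𝒮;∅ ⊢ v̄ : T̄ and 𝒟;𝒜 ⊢ e : T, then 𝒟;∅ ⊢ e[x̄:=v̄] : T. -/
theorem substitution_lemma
    (OS D : SchemeEnv)
    -- 𝒟 extends the distinguished built-in local-type-scheme environment 𝒪𝒮
    (hOS : ∀ n s, OS n = some s → D n = some s)
    (xs : List String) (Ts : List Ty) (vs : List Expr)
    (hlen : vs.length = xs.length)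
    (hval : ∀ v ∈ vs, IsVal v)
    (hvty : List.Forall₂ (fun v T => HasTy OS VarEnv.empty v T) vs Ts)
    (e e' : Expr) (T : Ty)
    (hty : HasTy D (extendA VarEnv.empty xs Ts) e T)
    (hsub : Subst (bindVals xs vs) e e') :
    HasTy D VarEnv.empty e' T := by
  refine hty.subst _ _ _ ⟨fun x v hx => ?_, fun x v T hx hA => ?_, fun x T hx hA => ?_⟩ hsub
  · exact (hval v (lookup_zip_forall₂ hvty xs x v hx).1).closed
  · have hA' : (xs.zip Ts).lookup x = some T := by
      simpa [extendA, VarEnv.empty] using hA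
    exact ((lookup_zip_forall₂ hvty xs x v hx).2 T hA').transfer hOS _ fun _ _ => rfl
  · by_cases hm : x ∈ xs
    · obtain ⟨w, hw⟩ := lookup_zip_some xs vs x hlen.symm hm
      rw [bindVals, hw] at hx
      cases hx
    · rw [extendA_notMem _ _ _ _ hm] at hA
      exact hA

end HFC
end

section
/- The unit-disc neighbouring relation satisfies the three event-structure properties: with neigh defined as in the unit-disc communication model, (1) neigh(ε,ε') implies t(ε') < t(ε), so the graph induced by neigh has no cycles; (2) if neigh(ε,ε₁), neigh(ε,ε₂) and dev(ε₁) = dev(ε₂), then ε₁ = ε₂ (every event linked from ε has a different device label); (3) if neigh(ε₀,ε'), neigh(ε₁,ε') and dev(ε₀) = dev(ε₁) = dev(ε'), then ε₀ = ε₁ (every event is linked from at most one event with the same device label). -/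
namespace UnitDisc

/-- Conditions (1)–(3) of the unit-disc communication model (Example 4.1):
`cond123 dev t near P Δ ε ε'` holds when (1) ε' happened in the time interval
of size Δ before ε; (2) the device of ε was constantly turned on between ε'
and ε; and (3) the two devices were neighbours when ε' happened. -/
def cond123 {E Pos : Type*} (dev : E → ℕ) (t : E → ℝ)
    (near : Pos → Pos → Prop) (P : ℕ → ℝ → Option Pos) (Δ : ℝ)
    (ε ε' : E) : Prop :=
  t ε' ∈ Set.Ico (t ε - Δ) (t ε) ∧
  (∀ s ∈ Set.Icc (t ε') (t ε), (P (dev ε) s).isSome) ∧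
  (∃ p p', P (dev ε) (t ε') = some p ∧ P (dev ε') (t ε') = some p' ∧ near p p')

/-- The neighbouring relation of the unit-disc communication model:
`neigh ε ε'` holds iff ε' satisfies conditions (1)–(3) with respect to ε and
(4) ε' is the last firing of its device satisfying them. -/
def udNeigh {E Pos : Type*} (dev : E → ℕ) (t : E → ℝ)
    (near : Pos → Pos → Prop) (P : ℕ → ℝ → Option Pos) (Δ : ℝ)
    (ε ε' : E) : Prop :=
  cond123 dev t near P Δ ε ε' ∧
  ¬ ∃ ε'', dev ε'' = dev ε' ∧ t ε' < t ε'' ∧ cond123 dev t near P Δ ε ε''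

/-- **The unit-disc neighbouring relation satisfies the three event-structure
properties**: (1) it is time-decreasing, hence its induced graph has no
cycles; (2) the neighbours of an event have pairwise distinct device labels;
(3) every event is linked from at most one event with the same device
label. -/
theorem unit_disc_event_structure_properties
    {E Pos : Type*} (dev : E → ℕ) (t : E → ℝ)
    (ht : Function.Injective t)
    (near : Pos → Pos → Prop)
    (hrefl : ∀ p, near p p) (hsymm : ∀ p q, near p q → near q p)
    (P : ℕ → ℝ → Option Pos) (Δ : ℝ) (hΔ : 0 < Δ) :
    (∀ ε ε', udNeigh dev t near P Δ ε ε' → t ε' < t ε) ∧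
    (∀ ε, ¬ Relation.TransGen (udNeigh dev t near P Δ) ε ε) ∧
    (∀ ε ε₁ ε₂, udNeigh dev t near P Δ ε ε₁ → udNeigh dev t near P Δ ε ε₂ →
      dev ε₁ = dev ε₂ → ε₁ = ε₂) ∧
    (∀ ε₀ ε₁ ε', udNeigh dev t near P Δ ε₀ ε' → udNeigh dev t near P Δ ε₁ ε' →
      dev ε₀ = dev ε' → dev ε₁ = dev ε' → ε₀ = ε₁) := by
  have h1 : ∀ ε ε', udNeigh dev t near P Δ ε ε' → t ε' < t ε := fun ε ε' h => h.1.1.2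
  have key : ∀ ε₀ ε₁ ε', udNeigh dev t near P Δ ε₀ ε' → udNeigh dev t near P Δ ε₁ ε' →
      dev ε₀ = dev ε' → dev ε₁ = dev ε' → ¬ t ε₀ < t ε₁ := by
    intro ε₀ ε₁ ε' h0 h h0d hd hlt
    have hl := h1 _ _ h0
    obtain ⟨⟨⟨ha, hb⟩, hon, -⟩, hno⟩ := h
    apply hno
    refine ⟨ε₀, h0d, hl, ⟨ha.trans hl.le, hlt⟩, fun s hs => hon s ⟨hl.le.trans hs.1, hs.2⟩, ?_⟩
    obtain ⟨p, hp⟩ := Option.isSome_iff_exists.1 (hon (t ε₀) ⟨hl.le, hlt.le⟩)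
    exact ⟨p, p, hp, by rw [h0d, ← hd]; exact hp, hrefl p⟩
  refine ⟨h1, ?_, ?_, ?_⟩
  · intro ε h
    have : ∀ a b, Relation.TransGen (udNeigh dev t near P Δ) a b → t b < t a := by
      intro a b hab
      induction hab with
      | single h => exact h1 _ _ h
      | tail _ h ih => exact (h1 _ _ h).trans ih
    exact lt_irrefl _ (this _ _ h)
  · intro ε ε₁ ε₂ ha hb hd
    apply ht
    apply le_antisymm
    · exact not_lt.1 fun hlt => hb.2 ⟨ε₁, hd, hlt, ha.1⟩
    · exact not_lt.1 fun hlt => ha.2 ⟨ε₂, hd.symm, hlt, hb.1⟩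
  · intro ε₀ ε₁ ε' ha hb hda hdb
    apply ht
    exact le_antisymm (not_lt.1 (key _ _ _ hb ha hdb hda)) (not_lt.1 (key _ _ _ ha hb hda hdb))
end UnitDisc
end

section
/- Stabilisation of causal iteration on a finite event DAG: Let E be a finite type, R : E → E → Prop a well-founded relation (R ε' ε read 'ε' is a causal predecessor of ε'), V a type, f₀ : E → V, and h : E → (E → V) → V such that h ε f = h ε g whenever f and g agree on all ε' with R ε' ε. Define f : ℕ → E → V by f 0 = f₀ and f (n+1) ε = h ε (f n). Then f n = f (card E) for all n ≥ card E, where card E is the cardinality of E. -/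
/-- **Stabilisation of causal iteration on a finite event DAG**: let `E` be a
finite type, `R` a well-founded causal-predecessor relation, `f₀ : E → V` an
initial assignment and `h` an update function whose value at `ε` depends only
on the values at the causal predecessors of `ε`.  Then the iteration
`f 0 = f₀`, `f (n+1) ε = h ε (f n)` stabilises after at most `card E` steps:
`f n = f (card E)` for all `n ≥ card E`. -/
theorem causal_iteration_stabilises {E : Type*} [Fintype E] {V : Type*}
    (R : E → E → Prop) (hwf : WellFounded R)
    (f₀ : E → V) (h : E → (E → V) → V)
    (hloc : ∀ ε (f g : E → V), (∀ ε', R ε' ε → f ε' = g ε') → h ε f = h ε g)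
    (f : ℕ → E → V)
    (hf0 : f 0 = f₀) (hfs : ∀ n, f (n + 1) = fun ε => h ε (f n)) :
    ∀ n, Fintype.card E ≤ n → f n = f (Fintype.card E) := by
  classical
  let P : E → Finset E := fun ε => Finset.univ.filter (fun x => Relation.ReflTransGen R x ε)
  have key : ∀ ε, ∀ m n, (P ε).card ≤ m → (P ε).card ≤ n → f m ε = f n ε := by
    intro ε
    induction ε using hwf.induction with
    | _ ε ih =>
      intro m n hm hn
      have hpos : 0 < (P ε).card :=
        Finset.card_pos.mpr ⟨ε, by simp [P, Relation.ReflTransGen.refl]⟩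
      obtain ⟨m, rfl⟩ : ∃ k, m = k + 1 := ⟨m - 1, by omega⟩
      obtain ⟨n, rfl⟩ : ∃ k, n = k + 1 := ⟨n - 1, by omega⟩
      rw [hfs, hfs]
      apply hloc
      intro ε' hR
      have hlt : (P ε').card < (P ε).card := by
        apply Finset.card_lt_card
        rw [Finset.ssubset_iff_of_subset]
        · refine ⟨ε, by simp [P, Relation.ReflTransGen.refl], ?_⟩
          intro hmem
          have h1 : Relation.ReflTransGen R ε ε' := by simpa [P] using hmem
          have h2 : Relation.TransGen R ε ε := Relation.TransGen.tail' h1 hR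
          exact hwf.transGen.asymmetric _ _ h2 h2
        · intro x hx
          have h1 : Relation.ReflTransGen R x ε' := by simpa [P] using hx
          simpa [P] using h1.tail hR
      exact ih ε' hR m n (by omega) (by omega)
  intro n hn
  funext ε
  have hc : (P ε).card ≤ Fintype.card E := Finset.card_le_univ _
  exact key ε _ _ (hc.trans hn) hc
end
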